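/- Let G be a bounded simply connected domain whose boundary contains the origin as an NCS point, with associated closed disk D̄ := {z : |z − iγ| ≤ γ} for some γ ∈ (0,1), so that D̄∖{0} ⊂ G and g_G(iy, iγ)/y → +∞ as y → 0+. Let K ⊂ G be a compact set with K ∩ D̄ = ∅ and let μ₀ be a positive Borel measure on K with μ₀(K) > 0. Then lim_{y→0+} (1/y) ∫ g_G(iy, ζ) dμ₀(ζ) = +∞. -/

import Mathlib

open MeasureTheory Filter Metric Set Polynomial Topology
open scoped ENNReal Classical

noncomputable section

/-- The normalized zero counting measure of a polynomial. -/
noncomputable def zeroMeasure (p : Polynomial ℂ) : Measure ℂ :=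
  ((p.natDegree : ℝ≥0∞))⁻¹ • (p.roots.map (fun z => (Measure.dirac z : Measure ℂ))).sum

/-- Weak-star convergence of a sequence of measures along a filter: integrals of continuous
functions with compact support converge. -/
def WeakStarTo (μ : ℕ → Measure ℂ) (l : Filter ℕ) (ν : Measure ℂ) : Prop :=
  ∀ f : ℂ → ℝ, Continuous f → HasCompactSupport f →
    Tendsto (fun n => ∫ z, f z ∂(μ n)) l (𝓝 (∫ z, f z ∂ν))

/-- The logarithmic potential of a measure. -/
noncomputable def logPotential (μ : Measure ℂ) (z : ℂ) : ℝ :=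
  ∫ t, Real.log (1 / dist z t) ∂μ

/-- The logarithmic energy of a measure. -/
noncomputable def logEnergy (μ : Measure ℂ) : ℝ :=
  ∫ z, ∫ t, Real.log (1 / dist z t) ∂μ ∂μ

/-- The logarithmic kernel is integrable for the product measure. -/
def HasFiniteEnergy (μ : Measure ℂ) : Prop :=
  Integrable (fun p : ℂ × ℂ => Real.log (1 / dist p.1 p.2)) (μ.prod μ)

/-- The set of energies of probability measures of finite energy supported on `E`. -/
def energies (E : Set ℂ) : Set ℝ :=
  {I | ∃ μ : Measure ℂ, IsProbabilityMeasure μ ∧ μ Eᶜ = 0 ∧ HasFiniteEnergy μ ∧ I = logEnergy μ}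

/-- The logarithmic capacity of `E`: `exp(-V_E)` where `V_E` is the minimal energy, and `0`
if no probability measure on `E` has finite energy. -/
noncomputable def logCap (E : Set ℂ) : ℝ :=
  if (energies E).Nonempty then Real.exp (-sInf (energies E)) else 0

/-- `μ` is an equilibrium measure of `E`: an energy-minimizing probability measure on `E`. -/
def IsEquilibriumMeasure (E : Set ℂ) (μ : Measure ℂ) : Prop :=
  IsProbabilityMeasure μ ∧ μ Eᶜ = 0 ∧ HasFiniteEnergy μ ∧ logEnergy μ = sInf (energies E)

/-- The sup norm of a polynomial on a set. -/
noncomputable def supNorm (E : Set ℂ) (p : Polynomial ℂ) : ℝ :=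
  sSup ((fun z => ‖p.eval z‖) '' E)

/-- The unbounded connected component `Ω` of the complement of `E` (the points of the
complement whose connected component in the complement is unbounded). -/
def outerDomain (E : Set ℂ) : Set ℂ :=
  {z | z ∉ E ∧ ¬ Bornology.IsBounded (connectedComponentIn Eᶜ z)}

/-- A sequence of monic polynomials `P k` of respective degrees `N k`, indexed by an increasing
sequence `N` of positive integers, is asymptotically extremal on `E` if
`limsup ‖P k‖_E^(1/N k) ≤ cap E`. -/
def AsymptoticallyExtremal (E : Set ℂ) (N : ℕ → ℕ) (P : ℕ → Polynomial ℂ) : Prop :=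
  StrictMono N ∧ (∀ k, 0 < N k) ∧ (∀ k, (P k).Monic) ∧ (∀ k, (P k).natDegree = N k) ∧
    Filter.limsup (fun k => supNorm E (P k) ^ ((N k : ℝ)⁻¹)) atTop ≤ logCap E

/-- A function is harmonic on a planar set if it is locally the real part of an
analytic function. -/
def HarmonicOnPlane (u : ℂ → ℝ) (s : Set ℂ) : Prop :=
  ∀ z ∈ s, ∃ ε > 0, Metric.ball z ε ⊆ s ∧ ∃ f : ℂ → ℂ,
    AnalyticOnNhd ℂ f (Metric.ball z ε) ∧ ∀ w ∈ Metric.ball z ε, u w = (f w).re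

/-- `g` is the Green function of `G` with pole at `ζ`: harmonic and positive on `G ∖ {ζ}`,
`g(z) + log|z-ζ|` bounded near `ζ`, and `g → 0` at every boundary point of `G`. -/
structure IsGreenFunction (G : Set ℂ) (ζ : ℂ) (g : ℂ → ℝ) : Prop where
  harmonic : HarmonicOnPlane g (G \ {ζ})
  pos : ∀ z ∈ G \ {ζ}, 0 < g z
  logBounded : ∃ C : ℝ, ∀ᶠ z in 𝓝[G \ {ζ}] ζ, |g z + Real.log (dist z ζ)| ≤ C
  boundaryLimit : ∀ t ∈ frontier G, Tendsto g (𝓝[G] t) (𝓝 0)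

/-- `z₀` is a non-convex type singularity (NCS) point of `G`: a boundary point of `G`
carrying a closed disk `D̄ ⊆ G ∪ {z₀}` with `z₀` on its circumference, and a segment `L`
from a point `ζ₀` of the open disk to `z₀` along which `g_G(z,ζ₀)/|z-z₀| → +∞`. -/
def IsNCSPoint (G : Set ℂ) (z₀ : ℂ) : Prop :=
  z₀ ∈ frontier G ∧
    ∃ c : ℂ, ∃ r : ℝ, 0 < r ∧ dist z₀ c = r ∧ Metric.closedBall c r \ {z₀} ⊆ G ∧
      ∃ ζ₀ ∈ Metric.ball c r, ∀ g : ℂ → ℝ, IsGreenFunction G ζ₀ g →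
        Tendsto (fun z => g z / dist z z₀) (𝓝[segment ℝ ζ₀ z₀ \ {z₀}] z₀) atTop

end

/-!
Compare Green functions with different poles near the boundary. Let `L` be a compact subset of `G`
whose interior contains `K` and a further pole `a`. Since `g ζ z / g a z` is positive and jointly
continuous on `K × ∂L`, it is bounded below there by some `c > 0`, and the maximum principle for
`c * g a - g ζ` on `G ∖ L`, where neither function has a pole, extends the bound to all of `G ∖ L`.
Hence near `∂G` the potential of `μ₀` is at least `c * μ₀(K) * g a`.

Joint continuity rests on the regular part `g ζ z + log |z - ζ|`: two of these differ by at most the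
maximum over `t ∈ ∂G` of `|log |t - ζ| - log |t - ξ||`, which is small when `ξ` is close to `ζ`.
-/

lemma notMem_frontier_of_isOpen {X : Type*} [TopologicalSpace X] {s : Set X} (hs : IsOpen s) {x : X}
    (hx : x ∈ s) : x ∉ frontier s :=
  disjoint_right.mp (disjoint_frontier_iff_isOpen.mpr hs) hx

section MaximumPrinciple

open InnerProductSpace

lemma eventually_eq_of_harmonicAt_of_isLocalMax {u : ℂ → ℝ} {z : ℂ} (hu : HarmonicAt u z)
    (hmax : IsLocalMax u z) : ∀ᶠ w in 𝓝 z, u w = u z := by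
  obtain ⟨ε, hε, hball⟩ := Metric.eventually_nhds_iff_ball.mp hu.eventually
  obtain ⟨f, hf, hfu⟩ := HarmonicOnNhd.exists_analyticOnNhd_ball_re_eq hball
  have hmem : ball z ε ∈ 𝓝 z := ball_mem_nhds z hε
  have hnorm : ∀ w ∈ ball z ε, ‖Complex.exp (f w)‖ = Real.exp (u w) := fun w hw => by
    rw [Complex.norm_exp, ← hfu hw]
  have hdiff : ∀ᶠ w in 𝓝 z, DifferentiableAt ℂ (fun w => Complex.exp (f w)) w :=
    eventually_of_mem hmem fun w hw => (hf w hw).differentiableAt.cexp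
  have hmax_norm : IsLocalMax (norm ∘ fun w => Complex.exp (f w)) z := by
    filter_upwards [hmax, hmem] with w hw hwε
    simpa only [Function.comp_apply, hnorm w hwε, hnorm z (mem_ball_self hε), Real.exp_le_exp]
  filter_upwards [Complex.eventually_eq_of_isLocalMax_norm hdiff hmax_norm, hmem] with w hw hwε
  have := congrArg norm hw
  rwa [hnorm w hwε, hnorm z (mem_ball_self hε), Real.exp_eq_exp] at this

lemma isClosed_setOf_mem_and_le_of_frontier_lt {X : Type*} [TopologicalSpace X] {U : Set X}
    {u : X → ℝ} {c : ℝ} (hu : ContinuousOn u U)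
    (hbd : ∀ t ∈ frontier U, ∀ᶠ z in 𝓝[U] t, u z < c) : IsClosed {z | z ∈ U ∧ c ≤ u z} := by
  refine isClosed_of_closure_subset fun t ht => ?_
  have hlt : ¬∀ᶠ z in 𝓝[U] t, u z < c := fun h =>
    let ⟨_, ⟨hzU, hz⟩, hlt⟩ :=
      ((mem_closure_iff_frequently.mp ht).and_eventually (eventually_nhdsWithin_iff.mp h)).exists
    hz.not_gt (hlt hzU)
  have htU : t ∈ U := by
    by_contra htU
    exact hlt (hbd t ⟨closure_mono (fun _ => And.left) ht, fun h => htU (interior_subset h)⟩)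
  exact ⟨htU, not_lt.mp fun h => hlt ((hu t htU).eventually_lt_const h)⟩

/- `hbd` says `limsup u ≤ M` at boundary points; `Filter.limsup` itself is a junk value where `u` is
unbounded. -/
theorem le_of_harmonicOnNhd_of_frontier {U : Set ℂ} (hU : IsOpen U) (hUb : Bornology.IsBounded U)
    {u : ℂ → ℝ} (hu : HarmonicOnNhd u U) {M : ℝ}
    (hbd : ∀ t ∈ frontier U, ∀ c > M, ∀ᶠ z in 𝓝[U] t, u z < c) {z : ℂ} (hz : z ∈ U) :
    u z ≤ M := by
  by_contra! hMz
  have hclosed (c : ℝ) (hc : M < c) : IsClosed {w | w ∈ U ∧ c ≤ u w} :=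
    isClosed_setOf_mem_and_le_of_frontier_lt hu.continuousOn fun t ht => hbd t ht c hc
  have hcompact : IsCompact {w | w ∈ U ∧ u z ≤ u w} :=
    isCompact_of_isClosed_isBounded (hclosed _ hMz) (hUb.subset fun _ => And.left)
  obtain ⟨m, ⟨hmU, hzm⟩, hm⟩ := hcompact.exists_isMaxOn ⟨z, hz, le_rfl⟩
    (hu.continuousOn.mono fun _ => And.left)
  have hmax : ∀ w ∈ U, u w ≤ u m := fun w hw =>
    (le_total (u z) (u w)).elim (fun h => hm ⟨hw, h⟩) fun h => h.trans hzm
  have hopen : IsOpen {w | w ∈ U ∧ u m ≤ u w} := by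
    refine isOpen_iff_mem_nhds.mpr fun w ⟨hwU, hmw⟩ => ?_
    have hlocal : IsLocalMax u w :=
      eventually_of_mem (hU.mem_nhds hwU) fun v hv => (hmax v hv).trans hmw
    filter_upwards [hU.mem_nhds hwU, eventually_eq_of_harmonicAt_of_isLocalMax (hu w hwU) hlocal]
      with v hvU hv using ⟨hvU, hv ▸ hmw⟩
  have huniv : {w | w ∈ U ∧ u m ≤ u w} = univ :=
    IsClopen.eq_univ ⟨hclosed _ (hMz.trans_le hzm), hopen⟩ ⟨m, hmU, le_rfl⟩
  exact NormedSpace.unbounded_univ ℝ ℂ (huniv ▸ hUb.subset fun _ => And.left)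

lemma tendsto_log_norm_nhdsWithin_atBot {X E : Type*} [TopologicalSpace X] [NormedAddCommGroup E]
    {f : X → E} {s : Set X} {t : X} (hf : ContinuousAt f t) (hft : f t = 0)
    (hs : ∀ z ∈ s, f z ≠ 0) : Tendsto (fun z => Real.log ‖f z‖) (𝓝[s] t) atBot := by
  refine Real.tendsto_log_nhdsNE_zero.comp (tendsto_nhdsWithin_iff.mpr ⟨?_, ?_⟩)
  · simpa [hft] using hf.norm.tendsto.mono_left nhdsWithin_le_nhds
  · filter_upwards [self_mem_nhdsWithin] with z hz using norm_ne_zero_iff.mpr (hs z hz)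

-- The barrier `ε * log ‖f‖` pushes `u` to `-∞` at the exceptional points; then let `ε → 0`.
theorem le_of_harmonicOnNhd_of_frontier_of_isBoundedUnder {U : Set ℂ} (hU : IsOpen U)
    (hUb : Bornology.IsBounded U) {u : ℂ → ℝ} (hu : HarmonicOnNhd u U) {f : ℂ → ℂ}
    (hf : AnalyticOnNhd ℂ f (closure U)) (hf0 : ∀ z ∈ U, f z ≠ 0) {M : ℝ}
    (hbd : ∀ t ∈ frontier U, f t ≠ 0 → ∀ c > M, ∀ᶠ z in 𝓝[U] t, u z < c)
    (hbdd : ∀ t ∈ frontier U, f t = 0 → IsBoundedUnder (· ≤ ·) (𝓝[U] t) u) {z : ℂ}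
    (hz : z ∈ U) : u z ≤ M := by
  obtain ⟨B, hB⟩ := hUb.isCompact_closure.exists_bound_of_continuousOn hf.continuousOn
  have hlog : ∀ w ∈ U, Real.log ‖f w‖ - Real.log B ≤ 0 := fun w hw =>
    sub_nonpos.mpr (Real.log_le_log (norm_pos_iff.mpr (hf0 w hw)) (hB w (subset_closure hw)))
  have hperturbed : ∀ ε > 0, u z + ε * (Real.log ‖f z‖ - Real.log B) ≤ M := by
    intro ε hε
    refine le_of_harmonicOnNhd_of_frontier (u := fun w => u w + ε * (Real.log ‖f w‖ - Real.log B))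
      hU hUb (fun w hw => (hu w hw).add ?_) (fun t ht c hc => ?_) hz
    · exact (((hf w (subset_closure hw)).harmonicAt_log_norm (hf0 w hw)).sub
        (harmonicAt_const _)).const_smul
    · by_cases hft : f t = 0
      · obtain ⟨A, hA⟩ := hbdd t ht hft
        have hbot := (tendsto_atBot_add_const_right _ (-Real.log B)
          (tendsto_log_norm_nhdsWithin_atBot (hf t ht.1).continuousAt hft hf0)).const_mul_atBot hε
        filter_upwards [eventually_map.mp hA, hbot.eventually_lt_atBot (c - A)] with w hwA hw
        rw [← sub_eq_add_neg] at hw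
        linarith
      · filter_upwards [hbd t ht hft c hc, self_mem_nhdsWithin] with w hwc hw
        linarith [mul_nonpos_of_nonneg_of_nonpos hε.le (hlog w hw)]
  have hlim : Tendsto (fun ε : ℝ => u z + ε * (Real.log ‖f z‖ - Real.log B)) (𝓝[>] 0)
      (𝓝 (u z)) := by
    have : Continuous fun ε : ℝ => u z + ε * (Real.log ‖f z‖ - Real.log B) := by fun_prop
    simpa using (this.tendsto 0).mono_left nhdsWithin_le_nhds
  exact le_of_tendsto hlim (eventually_of_mem self_mem_nhdsWithin hperturbed)

end MaximumPrinciple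

section RegularPart

open InnerProductSpace

lemma HarmonicOnPlane.harmonicOnNhd {u : ℂ → ℝ} {s : Set ℂ} (hu : HarmonicOnPlane u s) :
    HarmonicOnNhd u s := by
  intro z hz
  obtain ⟨ε, hε, -, f, hf, hfu⟩ := hu z hz
  exact (harmonicAt_congr_nhds (eventually_of_mem (ball_mem_nhds z hε) hfu)).mpr
    (hf z (mem_ball_self hε)).harmonicAt_re

lemma harmonicAt_log_dist {z ζ : ℂ} (h : z ≠ ζ) :
    HarmonicAt (fun w => Real.log (dist w ζ)) z := by
  simp only [dist_eq_norm]
  exact AnalyticAt.harmonicAt_log_norm (by fun_prop) (sub_ne_zero.mpr h)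

lemma eventually_forall_abs_log_dist_sub_lt {X : Type*} [MetricSpace X] {K : Set X}
    (hK : IsCompact K) {ζ : X} (hζK : ζ ∉ K) {ε : ℝ} (hε : 0 < ε) :
    ∀ᶠ ξ in 𝓝 ζ, ∀ t ∈ K, |Real.log (dist t ξ) - Real.log (dist t ζ)| < ε := by
  refine hK.eventually_forall_of_forall_eventually fun t ht => ?_
  have hne : t ≠ ζ := fun h => hζK (h ▸ ht)
  have hmoving : ContinuousAt (fun p : X × X => Real.log (dist p.2 p.1)) (ζ, t) :=
    (continuousAt_snd.dist continuousAt_fst).log (dist_ne_zero.mpr hne)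
  have hfixed : ContinuousAt (fun p : X × X => Real.log (dist p.2 ζ)) (ζ, t) :=
    (continuousAt_snd.dist continuousAt_const).log (dist_ne_zero.mpr hne)
  exact (hmoving.sub hfixed).abs.eventually_lt_const (by simpa)

/-- The regular part `z ↦ g z + log |z - ζ|` of a Green function `g` with pole `ζ`. At `z = ζ` its
value `g ζ` is arbitrary: the singularity is not removed by taking a limit. -/
noncomputable def greenRegularPart (g : ℂ → ℝ) (ζ z : ℂ) : ℝ :=
  g z + Real.log (dist z ζ)

namespace IsGreenFunction

variable {G : Set ℂ} {ζ ξ : ℂ} {g h : ℂ → ℝ}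

lemma harmonicOnNhd (hg : IsGreenFunction G ζ g) : HarmonicOnNhd g (G \ {ζ}) :=
  hg.harmonic.harmonicOnNhd

lemma harmonicOnNhd_regularPart (hg : IsGreenFunction G ζ g) :
    HarmonicOnNhd (greenRegularPart g ζ) (G \ {ζ}) := fun z hz =>
  (hg.harmonicOnNhd z hz).add (harmonicAt_log_dist hz.2)

lemma tendsto_regularPart (hg : IsGreenFunction G ζ g) (hζ : ζ ∉ frontier G) {t : ℂ}
    (ht : t ∈ frontier G) :
    Tendsto (greenRegularPart g ζ) (𝓝[G] t) (𝓝 (Real.log (dist t ζ))) := by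
  have hne : t ≠ ζ := fun h => hζ (h ▸ ht)
  have hlim := (hg.boundaryLimit t ht).add
    ((harmonicAt_log_dist hne).1.continuousAt.tendsto.mono_left nhdsWithin_le_nhds)
  rwa [zero_add] at hlim

lemma isBoundedUnder_abs_regularPart (hg : IsGreenFunction G ζ g) {t : ℂ} (ht : t ∈ G) :
    IsBoundedUnder (· ≤ ·) (𝓝[G \ {ζ}] t) fun z => |greenRegularPart g ζ z| := by
  rcases eq_or_ne t ζ with rfl | hne
  · obtain ⟨C, hC⟩ := hg.logBounded
    exact ⟨C, hC⟩
  · exact (hg.harmonicOnNhd_regularPart t ⟨ht, hne⟩).1.continuousAt.abs.tendsto.isBoundedUnder_le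
      |>.mono nhdsWithin_le_nhds

lemma regularPart_sub_le (hG : IsOpen G) (hGb : Bornology.IsBounded G) (hζ : ζ ∈ G) (hξ : ξ ∈ G)
    (hg : IsGreenFunction G ζ g) (hh : IsGreenFunction G ξ h) {M : ℝ}
    (hM : ∀ t ∈ frontier G, Real.log (dist t ζ) - Real.log (dist t ξ) ≤ M) {z : ℂ}
    (hz : z ∈ G \ {ζ, ξ}) : greenRegularPart g ζ z - greenRegularPart h ξ z ≤ M := by
  set U : Set ℂ := G \ {ζ, ξ}
  have hUζ : U ⊆ G \ {ζ} := sdiff_subset_sdiff_right (by simp)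
  have hUξ : U ⊆ G \ {ξ} := sdiff_subset_sdiff_right (by simp)
  have hU : IsOpen U := hG.sdiff (toFinite _).isClosed
  refine le_of_harmonicOnNhd_of_frontier_of_isBoundedUnder
    (u := greenRegularPart g ζ - greenRegularPart h ξ) (f := fun w => (w - ζ) * (w - ξ))
    hU (hGb.subset sdiff_subset)
    ((hg.harmonicOnNhd_regularPart.mono hUζ).sub (hh.harmonicOnNhd_regularPart.mono hUξ))
    (fun w _ => by fun_prop)
    (fun w hw => mul_ne_zero (sub_ne_zero.mpr (hUζ hw).2) (sub_ne_zero.mpr (hUξ hw).2))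
    (fun t ht hft c hc => ?_) (fun t _ hft => ?_) hz
  · have htG : t ∈ frontier G := by
      rw [hU.frontier_eq] at ht
      rw [hG.frontier_eq]
      refine ⟨closure_mono sdiff_subset ht.1, fun htG => ht.2 ⟨htG, ?_⟩⟩
      simpa [sub_eq_zero] using hft
    have hlim := (hg.tendsto_regularPart (notMem_frontier_of_isOpen hG hζ) htG).sub
      (hh.tendsto_regularPart (notMem_frontier_of_isOpen hG hξ) htG)
    exact (hlim.mono_left (nhdsWithin_mono t sdiff_subset)).eventually_lt_const
      ((hM t htG).trans_lt hc)
  · have htG : t ∈ G := by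
      rcases mul_eq_zero.mp hft with h | h <;> rw [sub_eq_zero.mp h] <;> assumption
    obtain ⟨A, hA⟩ := (hg.isBoundedUnder_abs_regularPart htG).mono (nhdsWithin_mono t hUζ)
    obtain ⟨B, hB⟩ := (hh.isBoundedUnder_abs_regularPart htG).mono (nhdsWithin_mono t hUξ)
    refine ⟨A + B, eventually_map.mpr ?_⟩
    filter_upwards [eventually_map.mp hA, eventually_map.mp hB] with w hwA hwB
    simp only [Pi.sub_apply]
    linarith [le_abs_self (greenRegularPart g ζ w), neg_abs_le (greenRegularPart h ξ w)]

lemma abs_regularPart_sub_le (hG : IsOpen G) (hGb : Bornology.IsBounded G) (hζ : ζ ∈ G)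
    (hξ : ξ ∈ G) (hg : IsGreenFunction G ζ g) (hh : IsGreenFunction G ξ h) {M : ℝ}
    (hM : ∀ t ∈ frontier G, |Real.log (dist t ζ) - Real.log (dist t ξ)| ≤ M) {z : ℂ}
    (hz : z ∈ G \ {ζ, ξ}) : |greenRegularPart g ζ z - greenRegularPart h ξ z| ≤ M :=
  abs_sub_le_iff.mpr
    ⟨regularPart_sub_le hG hGb hζ hξ hg hh (fun t ht => (abs_sub_le_iff.mp (hM t ht)).1) hz,
      regularPart_sub_le hG hGb hξ hζ hh hg (fun t ht => (abs_sub_le_iff.mp (hM t ht)).2)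
        (pair_comm ζ ξ ▸ hz)⟩

theorem mul_le_of_frontier (hG : IsOpen G) (hGb : Bornology.IsBounded G)
    (hg : IsGreenFunction G ζ g) (hh : IsGreenFunction G ξ h) {L : Set ℂ} (hL : IsClosed L)
    (hζ : ζ ∈ interior L) (hξ : ξ ∈ interior L) {c : ℝ}
    (hc : ∀ t ∈ frontier L ∩ G, c * g t ≤ h t) {z : ℂ} (hz : z ∈ G \ L) : c * g z ≤ h z := by
  have hharm : HarmonicOnNhd (c • g - h) (G \ interior L) :=
    (hg.harmonicOnNhd.mono (sdiff_subset_sdiff_right (singleton_subset_iff.mpr hζ))).const_smul.sub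
      (hh.harmonicOnNhd.mono (sdiff_subset_sdiff_right (singleton_subset_iff.mpr hξ)))
  refine sub_nonpos.mp (le_of_harmonicOnNhd_of_frontier (u := c • g - h) (hG.sdiff hL)
    (hGb.subset sdiff_subset) (hharm.mono (sdiff_subset_sdiff_right interior_subset))
    (fun t ht b hb => ?_) hz)
  by_cases htG : t ∈ G
  · have htL : t ∈ frontier L := by
      rcases frontier_inter_subset G Lᶜ ht with ⟨h, -⟩ | ⟨-, h⟩
      · exact absurd h (notMem_frontier_of_isOpen hG htG)
      · rwa [frontier_compl] at h
    have hle : (c • g - h) t ≤ 0 := sub_nonpos.mpr (hc t ⟨htL, htG⟩)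
    exact ((hharm t ⟨htG, htL.2⟩).1.continuousAt.eventually_lt_const (hle.trans_lt hb)).filter_mono
      nhdsWithin_le_nhds
  · have htfr : t ∈ frontier G :=
      hG.frontier_eq ▸ ⟨closure_mono sdiff_subset (frontier_subset_closure ht), htG⟩
    have hlim := ((hg.boundaryLimit t htfr).const_smul c).sub (hh.boundaryLimit t htfr)
    rw [smul_zero, sub_zero] at hlim
    exact (hlim.mono_left (nhdsWithin_mono t sdiff_subset)).eventually_lt_const hb

end IsGreenFunction

end RegularPart

section GreenKernel

variable {G K : Set ℂ} {g : ℂ → ℂ → ℝ}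

lemma continuousAt_greenRegularPart (hG : IsOpen G) (hGb : Bornology.IsBounded G)
    (hg : ∀ ζ ∈ G, IsGreenFunction G ζ (g ζ)) {ζ z : ℂ} (hζ : ζ ∈ G) (hz : z ∈ G) (hne : ζ ≠ z) :
    ContinuousAt (fun p : ℂ × ℂ => greenRegularPart (g p.1) p.1 p.2) (ζ, z) := by
  refine Metric.tendsto_nhds.mpr fun ε hε => ?_
  have hpole : ∀ᶠ ξ in 𝓝 ζ, ∀ t ∈ frontier G,
      |Real.log (dist t ξ) - Real.log (dist t ζ)| < ε / 2 :=
    eventually_forall_abs_log_dist_sub_lt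
      (hGb.isCompact_closure.of_isClosed_subset isClosed_frontier frontier_subset_closure)
      (notMem_frontier_of_isOpen hG hζ) (half_pos hε)
  have hfixed : ∀ᶠ w in 𝓝 z,
      dist (greenRegularPart (g ζ) ζ w) (greenRegularPart (g ζ) ζ z) < ε / 2 :=
    Metric.tendsto_nhds.mp
      ((hg ζ hζ).harmonicOnNhd_regularPart z ⟨hz, hne.symm⟩).1.continuousAt _ (half_pos hε)
  have hoff : ∀ᶠ p : ℂ × ℂ in 𝓝 (ζ, z), p.1 ≠ p.2 :=
    (isOpen_ne_fun continuous_fst continuous_snd).eventually_mem hne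
  filter_upwards [continuousAt_fst.eventually (hpole.and (hG.eventually_mem hζ)),
    continuousAt_snd.eventually (hfixed.and ((hG.eventually_mem hz).and
      (isOpen_ne.eventually_mem hne.symm))), hoff]
    with p ⟨hp₁, hp₁G⟩ ⟨hp₂, hp₂G, hp₂ζ⟩ hp
  have hmove : dist (greenRegularPart (g p.1) p.1 p.2) (greenRegularPart (g ζ) ζ p.2) ≤ ε / 2 :=
    IsGreenFunction.abs_regularPart_sub_le hG hGb hp₁G hζ (hg _ hp₁G) (hg ζ hζ)
      (fun t ht => (hp₁ t ht).le) ⟨hp₂G, by simp [hp.symm, hp₂ζ]⟩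
  linarith [dist_triangle (greenRegularPart (g p.1) p.1 p.2) (greenRegularPart (g ζ) ζ p.2)
    (greenRegularPart (g ζ) ζ z)]

theorem continuousOn_green_offDiag (hG : IsOpen G) (hGb : Bornology.IsBounded G)
    (hg : ∀ ζ ∈ G, IsGreenFunction G ζ (g ζ)) :
    ContinuousOn (fun p : ℂ × ℂ => g p.1 p.2) G.offDiag := by
  rintro ⟨ζ, z⟩ ⟨hζ, hz, hne⟩
  have hlog : ContinuousAt (fun p : ℂ × ℂ => Real.log (dist p.2 p.1)) (ζ, z) :=
    (continuousAt_snd.dist continuousAt_fst).log (dist_ne_zero.mpr hne.symm)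
  have hcont := (continuousAt_greenRegularPart hG hGb hg hζ hz hne).sub hlog
  exact (hcont.congr (Eventually.of_forall fun p => add_sub_cancel_right _ _)).continuousWithinAt

theorem exists_isCompact_forall_mul_green_le (hG : IsOpen G) (hGb : Bornology.IsBounded G)
    (hg : ∀ ζ ∈ G, IsGreenFunction G ζ (g ζ)) (hK : IsCompact K) (hKG : K ⊆ G) {a : ℂ}
    (ha : a ∈ G) :
    ∃ L, IsCompact L ∧ K ⊆ L ∧ L ⊆ G ∧ ∃ c > 0, ∀ ζ ∈ K, ∀ z ∈ G \ L, c * g a z ≤ g ζ z := by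
  obtain ⟨L, hL, haKL, hLG⟩ :=
    exists_compact_between (hK.insert a) hG (insert_subset ha hKG)
  have haL : a ∈ interior L := haKL (mem_insert a K)
  have hKL : K ⊆ interior L := (subset_insert a K).trans haKL
  have hfrG : frontier L ⊆ G := hL.isClosed.frontier_subset.trans hLG
  have hne {ζ z : ℂ} (hζ : ζ ∈ interior L) (hz : z ∈ frontier L) : ζ ≠ z := fun h =>
    hz.2 (h ▸ hζ)
  have hpos {ζ z : ℂ} (hζ : ζ ∈ interior L) (hz : z ∈ frontier L) : 0 < g ζ z :=
    (hg ζ (hLG (interior_subset hζ))).pos z ⟨hfrG hz, (hne hζ hz).symm⟩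
  have hcont : ContinuousOn (fun p : ℂ × ℂ => g p.1 p.2) (interior L ×ˢ frontier L) :=
    (continuousOn_green_offDiag hG hGb hg).mono fun p hp =>
      ⟨hLG (interior_subset hp.1), hfrG hp.2, hne hp.1 hp.2⟩
  have hratio : ContinuousOn (fun p : ℂ × ℂ => g p.1 p.2 / g a p.2) (K ×ˢ frontier L) :=
    (hcont.mono (prod_mono_left hKL)).div
      (hcont.comp (f := fun p : ℂ × ℂ => (a, p.2)) (by fun_prop) fun p hp => ⟨haL, hp.2⟩)
      fun p hp => (hpos haL hp.2).ne'
  obtain ⟨c, hc, hcle⟩ := (hK.prod (hL.of_isClosed_subset isClosed_frontier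
    hL.isClosed.frontier_subset)).exists_forall_le' hratio
    fun p hp => div_pos (hpos (hKL hp.1) hp.2) (hpos haL hp.2)
  refine ⟨L, hL, hKL.trans interior_subset, hLG, c, hc, fun ζ hζ z hz => ?_⟩
  exact (hg a ha).mul_le_of_frontier hG hGb (hg ζ (hKG hζ)) hL.isClosed haL (hKL hζ)
    (fun t ht => (le_div_iff₀ (hpos haL ht.1)).mp (hcle (ζ, t) ⟨hζ, ht.1⟩)) hz

lemma integrable_green (hG : IsOpen G) (hGb : Bornology.IsBounded G)
    (hg : ∀ ζ ∈ G, IsGreenFunction G ζ (g ζ)) (hK : IsCompact K) (hKG : K ⊆ G) {μ : Measure ℂ}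
    [IsFiniteMeasure μ] (hμ : μ Kᶜ = 0) {z : ℂ} (hz : z ∈ G \ K) :
    Integrable (fun ζ => g ζ z) μ := by
  have hcont : ContinuousOn (fun ζ => g ζ z) K :=
    (continuousOn_green_offDiag hG hGb hg).comp (f := fun ζ => (ζ, z)) (by fun_prop)
      fun ζ hζ => ⟨hKG hζ, hz.1, (ne_of_mem_of_not_mem hζ hz.2 :)⟩
  rw [← Measure.restrict_eq_self_of_ae_mem (mem_ae_iff.mpr hμ)]
  exact hcont.integrableOn_compact hK

theorem exists_isCompact_forall_mul_green_le_integral (hG : IsOpen G) (hGb : Bornology.IsBounded G)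
    (hg : ∀ ζ ∈ G, IsGreenFunction G ζ (g ζ)) (hK : IsCompact K) (hKG : K ⊆ G) {a : ℂ}
    (ha : a ∈ G) {μ : Measure ℂ} [IsFiniteMeasure μ] (hμ : μ Kᶜ = 0) (hμ0 : μ ≠ 0) :
    ∃ L, IsCompact L ∧ L ⊆ G ∧ ∃ c > 0, ∀ z ∈ G \ L, c * g a z ≤ ∫ ζ, g ζ z ∂μ := by
  have : NeZero μ := ⟨hμ0⟩
  obtain ⟨L, hL, hKL, hLG, c, hc, hcg⟩ :=
    exists_isCompact_forall_mul_green_le hG hGb hg hK hKG ha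
  refine ⟨L, hL, hLG, μ.real univ * c, mul_pos measureReal_univ_pos hc, fun z hz => ?_⟩
  calc μ.real univ * c * g a z = ∫ _, c * g a z ∂μ := by
        rw [integral_const, smul_eq_mul, mul_assoc]
    _ ≤ ∫ ζ, g ζ z ∂μ :=
        integral_mono_ae (integrable_const _)
          (integrable_green hG hGb hg hK hKG hμ (sdiff_subset_sdiff_right hKL hz))
          (eventually_of_mem (mem_ae_iff.mpr hμ) fun ζ hζ => hcg ζ hζ z hz)

theorem green_potential_limit_at_NCS_general {ι : Type*} {l : Filter ι} (hG : IsOpen G)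
    (hGb : Bornology.IsBounded G) (hg : ∀ ζ ∈ G, IsGreenFunction G ζ (g ζ)) {a z₀ : ℂ} (ha : a ∈ G)
    (hz₀ : z₀ ∈ frontier G) {z : ι → ℂ} (hz : Tendsto z l (𝓝[G] z₀)) {r : ι → ℝ}
    (hlim : Tendsto (fun i => g a (z i) / r i) l atTop) (hK : IsCompact K) (hKG : K ⊆ G)
    {μ : Measure ℂ} [IsFiniteMeasure μ] (hμ : μ Kᶜ = 0) (hμ0 : μ ≠ 0) :
    Tendsto (fun i => (∫ ζ, g ζ (z i) ∂μ) / r i) l atTop := by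
  obtain ⟨L, hL, hLG, c, hc, hcg⟩ :=
    exists_isCompact_forall_mul_green_le_integral hG hGb hg hK hKG ha hμ hμ0
  have hz₀G : z₀ ∉ G := fun h => notMem_frontier_of_isOpen hG h hz₀
  have hzG : ∀ᶠ i in l, z i ∈ G \ insert a L :=
    hz.eventually (inter_mem self_mem_nhdsWithin (mem_nhdsWithin_of_mem_nhds
      ((hL.insert a).isClosed.compl_mem_nhds fun h => hz₀G (insert_subset ha hLG h))))
  refine tendsto_atTop_mono' l ?_ (hlim.const_mul_atTop hc)
  filter_upwards [hzG, hlim.eventually_gt_atTop 0] with i hi hratio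
  have hgpos : 0 < g a (z i) := (hg a ha).pos _ ⟨hi.1, fun h => hi.2 (Or.inl h)⟩
  have hr : 0 < r i := (div_pos_iff_of_pos_left hgpos).mp hratio
  rw [← mul_div_assoc]
  exact div_le_div_of_nonneg_right (hcg _ ⟨hi.1, fun h => hi.2 (Or.inr h)⟩) hr.le

end GreenKernel

lemma tendsto_ofReal_mul_I_nhdsGT_zero {G : Set ℂ} {γ : ℝ} (hγ : 0 < γ)
    (hdisk : closedBall (γ * Complex.I) γ \ {0} ⊆ G) :
    Tendsto (fun y : ℝ => (y : ℂ) * Complex.I) (𝓝[>] 0) (𝓝[G] 0) := by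
  refine tendsto_nhdsWithin_iff.mpr ⟨?_, ?_⟩
  · have : Continuous fun y : ℝ => (y : ℂ) * Complex.I := by fun_prop
    simpa using (this.tendsto 0).mono_left nhdsWithin_le_nhds
  · filter_upwards [Ioo_mem_nhdsGT hγ] with y hy
    refine hdisk ⟨?_, by simpa using hy.1.ne'⟩
    rw [mem_closedBall, dist_eq_norm, ← sub_mul, ← Complex.ofReal_sub, norm_mul, Complex.norm_I,
      mul_one, Complex.norm_real, Real.norm_eq_abs, abs_le]
    constructor <;> linarith [hy.1, hy.2]

/-- **The limit (4.6)–(4.8).** Let `G` be a bounded simply connected domain whose boundary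
contains the origin as an NCS point, with associated closed disk `D̄ = {|z - iγ| ≤ γ}`,
`γ ∈ (0,1)`, so that `D̄ ∖ {0} ⊆ G` and `g_G(iy, iγ)/y → +∞` as `y → 0+`. If `K ⊆ G` is
compact with `K ∩ D̄ = ∅` and `μ₀` is a positive finite Borel measure on `K`, then
`(1/y) ∫ g_G(iy, ζ) dμ₀(ζ) → +∞` as `y → 0+`. -/
theorem green_potential_limit_at_NCS
    (G : Set ℂ) (hGopen : IsOpen G) (hGconn : IsConnected G)
    (hGbdd : Bornology.IsBounded G) (hGsc : SimplyConnectedSpace G)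
    (γ : ℝ) (hγ : γ ∈ Set.Ioo (0 : ℝ) 1)
    (h0 : (0 : ℂ) ∈ frontier G)
    (hdisk : Metric.closedBall ((γ : ℂ) * Complex.I) γ \ {0} ⊆ G)
    (g : ℂ → ℂ → ℝ) (hg : ∀ ζ ∈ G, IsGreenFunction G ζ (g ζ))
    (hNCS : IsNCSPoint G 0)
    (hlim : Tendsto (fun y : ℝ => g ((γ : ℂ) * Complex.I) ((y : ℂ) * Complex.I) / y)
      (𝓝[>] (0 : ℝ)) atTop)
    (K : Set ℂ) (hK : IsCompact K) (hKG : K ⊆ G)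
    (hKD : K ∩ Metric.closedBall ((γ : ℂ) * Complex.I) γ = ∅)
    (μ₀ : Measure ℂ) [IsFiniteMeasure μ₀] (hμ₀supp : μ₀ Kᶜ = 0) (hμ₀pos : 0 < μ₀ K) :
    Tendsto (fun y : ℝ => (∫ ζ, g ζ ((y : ℂ) * Complex.I) ∂μ₀) / y)
      (𝓝[>] (0 : ℝ)) atTop := by
  have hcenter : (γ : ℂ) * Complex.I ∈ G :=
    hdisk ⟨mem_closedBall_self hγ.1.le, by simpa using hγ.1.ne'⟩
  have hμ₀ : μ₀ ≠ 0 := fun h => by simp [h] at hμ₀pos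
  exact green_potential_limit_at_NCS_general hGopen hGbdd hg hcenter h0
    (tendsto_ofReal_mul_I_nhdsGT_zero hγ.1 hdisk) hlim hK hKG hμ₀supp hμ₀
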